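/- arXiv:0812.4058 — 6 statements merged into one kernel-verified Lean document; each statement's English description precedes it below -/
import Mathlib

section
/- Let (V, m) be an n-ary Nambu algebra over a field K of characteristic zero and let ρ : V → V be an endomorphism of (V, m). Define the n-linear map m_ρ = ρ ∘ m. Then the triple (V, m_ρ, (ρ, ..., ρ)) is an n-ary Hom-Nambu algebra, i.e. m_ρ satisfies the n-ary Hom-Nambu identity with α_1 = ... = α_{n-1} = ρ. -/
open scoped BigOperators TensorProduct

/-- The argument vector `(x_1, …, x_{n-1}, v)` of length `n`. -/
def NambuArgs {V : Type*} {n : ℕ} (x : Fin (n - 1) → V) (v : V) : Fin n → V :=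
  fun j => if h : (j : ℕ) < n - 1 then x ⟨j, h⟩ else v

/-- The `n`-ary Hom-Nambu identity for an `n`-linear map `m` with twisting
maps `α_1, …, α_{n-1}` (0-indexed here): for all `x_1, …, x_{n-1}` and `y_1, …, y_n`,
`m(α_1 x_1, …, α_{n-1} x_{n-1}, m(y_1, …, y_n))`
`= Σ_{i=1}^{n} m(α_1 y_1, …, α_{i-1} y_{i-1}, m(x_1, …, x_{n-1}, y_i), α_i y_{i+1}, …, α_{n-1} y_n)`. -/
def HomNambuIdentity {K V : Type*} [Field K] [AddCommGroup V] [Module K V] {n : ℕ}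
    (m : MultilinearMap K (fun _ : Fin n => V) V) (α : Fin (n - 1) → V →ₗ[K] V) : Prop :=
  ∀ (x : Fin (n - 1) → V) (y : Fin n → V),
    m (NambuArgs (fun k => α k (x k)) (m y)) =
      ∑ i : Fin n, m (fun j : Fin n =>
        if h : (j : ℕ) < (i : ℕ) then α ⟨j, by omega⟩ (y j)
        else if h' : (j : ℕ) = (i : ℕ) then m (NambuArgs x (y i))
        else α ⟨(j : ℕ) - 1, by omega⟩ (y j))

/-- `ρ` is an endomorphism of the `n`-ary algebra `(V, m)`. -/
def IsNAryEndo {K V : Type*} [Field K] [AddCommGroup V] [Module K V] {n : ℕ}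
    (m : MultilinearMap K (fun _ : Fin n => V) V) (ρ : V →ₗ[K] V) : Prop :=
  ∀ x : Fin n → V, ρ (m x) = m (fun i => ρ (x i))

/-!
Each side of the twisted identity is the image under `ρ ∘ ρ` of the corresponding side of the
original one: the `ρ` of the inner `ρ ∘ m`, together with the `ρ` in the other arguments, is pulled
out through the outer `m`, and joins the `ρ` already in front. The argument allows arbitrary
twisting maps `α_k`, which become `ρ ∘ α_k`; a Nambu algebra is the case `α_k = id`.
-/

/-- The argument vector `(α_1 y_1, …, α_{i-1} y_{i-1}, w, α_i y_{i+1}, …, α_{n-1} y_n)` of the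
`i`-th summand of the Hom-Nambu identity. The `α_k` are arbitrary functions, so that an
endomorphism can be composed with each of them. -/
def twistedReplace {V W : Type*} {n : ℕ} (α : Fin (n - 1) → V → W) (y : Fin n → V) (i : Fin n)
    (w : W) : Fin n → W :=
  fun j =>
    if _ : (j : ℕ) < (i : ℕ) then α ⟨j, by omega⟩ (y j)
    else if _ : (j : ℕ) = (i : ℕ) then w
    else α ⟨(j : ℕ) - 1, by omega⟩ (y j)

theorem comp_nambuArgs {V W : Type*} {n : ℕ} (f : V → W) (x : Fin (n - 1) → V) (v : V) :
    f ∘ (NambuArgs x v : Fin n → V) = NambuArgs (f ∘ x) (f v) :=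
  funext fun _ => apply_dite f _ _ _

theorem comp_twistedReplace {U V W : Type*} {n : ℕ} (f : V → W) (α : Fin (n - 1) → U → V)
    (y : Fin n → U) (i : Fin n) (v : V) :
    f ∘ twistedReplace α y i v = twistedReplace (fun k => f ∘ α k) y i (f v) := by
  funext j
  simp only [twistedReplace, Function.comp_apply, apply_dite f]

section Twist

variable {K V : Type*} [Field K] [AddCommGroup V] [Module K V] {n : ℕ}
  {m : MultilinearMap K (fun _ : Fin n => V) V} {α : Fin (n - 1) → V →ₗ[K] V} {ρ : V →ₗ[K] V}

theorem homNambuIdentity_iff :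
    HomNambuIdentity m α ↔ ∀ (x : Fin (n - 1) → V) (y : Fin n → V),
      m (NambuArgs (fun k => α k (x k)) (m y)) =
        ∑ i, m (twistedReplace (fun k => α k) y i (m (NambuArgs x (y i)))) :=
  Iff.rfl

theorem IsNAryEndo.map_nambuArgs (hρ : IsNAryEndo m ρ) (x : Fin (n - 1) → V) (v : V) :
    ρ (m (NambuArgs x v)) = m (NambuArgs (ρ ∘ x) (ρ v)) :=
  (hρ _).trans (congrArg m (comp_nambuArgs ρ x v))

theorem IsNAryEndo.map_twistedReplace (hρ : IsNAryEndo m ρ) (β : Fin (n - 1) → V → V)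
    (y : Fin n → V) (i : Fin n) (v : V) :
    ρ (m (twistedReplace β y i v)) = m (twistedReplace (fun k => ρ ∘ β k) y i (ρ v)) :=
  (hρ _).trans (congrArg m (comp_twistedReplace ρ β y i v))

theorem homNambu_of_nambu_endo_general (hm : HomNambuIdentity m α) (hρ : IsNAryEndo m ρ) :
    HomNambuIdentity (ρ.compMultilinearMap m) (fun k => ρ ∘ₗ α k) := by
  rw [homNambuIdentity_iff] at hm ⊢
  intro x y
  calc ρ (m (NambuArgs (fun k => ρ (α k (x k))) (ρ (m y))))
      = ρ (ρ (m (NambuArgs (fun k => α k (x k)) (m y)))) :=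
        congrArg ρ (hρ.map_nambuArgs _ _).symm
    _ = ∑ i, ρ (ρ (m (twistedReplace (fun k => α k) y i (m (NambuArgs x (y i)))))) := by
        rw [hm, map_sum, map_sum]
    _ = ∑ i, ρ (m (twistedReplace (fun k => ρ ∘ α k) y i (ρ (m (NambuArgs x (y i)))))) :=
        Finset.sum_congr rfl fun i _ => congrArg ρ (hρ.map_twistedReplace _ y i _)

end Twist

/-- Twisting an `n`-ary Nambu algebra `(V, m)` by an endomorphism `ρ`
yields the `n`-ary Hom-Nambu algebra `(V, ρ ∘ m, (ρ, …, ρ))`. -/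
theorem homNambu_of_nambu_endo {K V : Type*} [Field K] [CharZero K]
    [AddCommGroup V] [Module K V] {n : ℕ} (hn : 2 ≤ n)
    (m : MultilinearMap K (fun _ : Fin n => V) V)
    (hm : HomNambuIdentity m (fun _ => LinearMap.id))
    (ρ : V →ₗ[K] V) (hρ : IsNAryEndo m ρ) :
    HomNambuIdentity (ρ.compMultilinearMap m) (fun _ => ρ) :=
  homNambu_of_nambu_endo_general hm hρ
end

section
/- Let (V, m) be an n-ary Lie algebra over a field K of characteristic zero and let ρ : V → V be an endomorphism of (V, m). Define m_ρ = ρ ∘ m. Then (V, m_ρ, (ρ, ..., ρ)) is an n-ary Hom-Lie algebra: m_ρ is skew-symmetric and satisfies the n-ary Hom-Jacobi identity with α_1 = ... = α_{n-1} = ρ. -/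
open scoped BigOperators TensorProduct

/-- The `n`-ary Hom-Jacobi identity:
`Σ_{σ ∈ S_{2n-1}} sgn(σ) m(α_1(x_{σ(1)}), …, α_{n-1}(x_{σ(n-1)}), m(x_{σ(n)}, …, x_{σ(2n-1)})) = 0`. -/
def HomJacobiIdentity {K V : Type*} [Field K] [AddCommGroup V] [Module K V] {n : ℕ}
    (m : MultilinearMap K (fun _ : Fin n => V) V) (α : Fin (n - 1) → V →ₗ[K] V) : Prop :=
  ∀ x : Fin (2 * n - 1) → V,
    ∑ σ : Equiv.Perm (Fin (2 * n - 1)), (Equiv.Perm.sign σ : ℤ) •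
      m (fun j : Fin n =>
        if h : (j : ℕ) < n - 1 then α ⟨j, h⟩ (x (σ ⟨j, by omega⟩))
        else m (fun k : Fin n => x (σ ⟨n - 1 + (k : ℕ), by omega⟩))) = 0

/-- Skew-symmetry of an `n`-linear map:
`m(x_{σ(1)}, …, x_{σ(n)}) = sgn(σ) • m(x_1, …, x_n)`. -/
def SkewSymmetricMap {K V : Type*} [Field K] [AddCommGroup V] [Module K V] {n : ℕ}
    (m : MultilinearMap K (fun _ : Fin n => V) V) : Prop :=
  ∀ (σ : Equiv.Perm (Fin n)) (x : Fin n → V),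
    m (x ∘ σ) = (Equiv.Perm.sign σ : ℤ) • m x

section

variable {K V : Type*} [Field K] [AddCommGroup V] [Module K V] {n : ℕ}
  {m : MultilinearMap K (fun _ : Fin n => V) V}

theorem SkewSymmetricMap.compMultilinearMap (hm : SkewSymmetricMap m) (f : V →ₗ[K] V) :
    SkewSymmetricMap (f.compMultilinearMap m) := fun σ x =>
  calc f (m (x ∘ σ)) = f ((Equiv.Perm.sign σ : ℤ) • m x) := congrArg f (hm σ x)
    _ = (Equiv.Perm.sign σ : ℤ) • f (m x) := map_zsmul f _ _

/-- The nested bracket `m(α_1(x_1), …, α_{n-1}(x_{n-1}), m(x_n, …, x_{2n-1}))`, whose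
antisymmetrization is the left-hand side of the Hom-Jacobi identity. As there, variables and
slots are numbered from `0`, so the inner bracket sits in slot `n - 1` of the outer one. -/
def nestedBracket (m : MultilinearMap K (fun _ : Fin n => V) V) (α : Fin (n - 1) → V →ₗ[K] V)
    (x : Fin (2 * n - 1) → V) : V :=
  m fun j : Fin n =>
    if h : (j : ℕ) < n - 1 then α ⟨j, h⟩ (x ⟨j, by omega⟩)
    else m fun k : Fin n => x ⟨n - 1 + (k : ℕ), by omega⟩

theorem homJacobiIdentity_iff_sum_nestedBracket_eq_zero {α : Fin (n - 1) → V →ₗ[K] V} :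
    HomJacobiIdentity m α ↔ ∀ x : Fin (2 * n - 1) → V,
      ∑ σ : Equiv.Perm (Fin (2 * n - 1)),
        (Equiv.Perm.sign σ : ℤ) • nestedBracket m α (x ∘ σ) = 0 :=
  Iff.rfl

theorem IsNAryEndo.nestedBracket_comp {ρ : V →ₗ[K] V} (hρ : IsNAryEndo m ρ)
    (α : Fin (n - 1) → V →ₗ[K] V) (x : Fin (2 * n - 1) → V) :
    nestedBracket (ρ.compMultilinearMap m) (fun i => ρ ∘ₗ α i) x =
      ρ (ρ (nestedBracket m α x)) :=
  calc
    -- The last slot carries a `ρ` as well, because the inner bracket is twisted too.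
    ρ (m fun j : Fin n =>
        if h : (j : ℕ) < n - 1 then ρ (α ⟨j, h⟩ (x ⟨j, by omega⟩))
        else ρ (m fun k : Fin n => x ⟨n - 1 + (k : ℕ), by omega⟩))
      = ρ (m fun j : Fin n => ρ (
          if h : (j : ℕ) < n - 1 then α ⟨j, h⟩ (x ⟨j, by omega⟩)
          else m fun k : Fin n => x ⟨n - 1 + (k : ℕ), by omega⟩)) := by
        simp only [apply_dite ρ]
    _ = ρ (ρ (nestedBracket m α x)) := congrArg ρ (hρ _).symm

theorem HomJacobiIdentity.comp_of_isNAryEndo {α : Fin (n - 1) → V →ₗ[K] V}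
    (hm : HomJacobiIdentity m α) {ρ : V →ₗ[K] V} (hρ : IsNAryEndo m ρ) :
    HomJacobiIdentity (ρ.compMultilinearMap m) (fun i => ρ ∘ₗ α i) := by
  rw [homJacobiIdentity_iff_sum_nestedBracket_eq_zero] at hm ⊢
  intro x
  calc
    ∑ σ : Equiv.Perm (Fin (2 * n - 1)), (Equiv.Perm.sign σ : ℤ) •
        nestedBracket (ρ.compMultilinearMap m) (fun i => ρ ∘ₗ α i) (x ∘ σ)
      = ∑ σ : Equiv.Perm (Fin (2 * n - 1)), (Equiv.Perm.sign σ : ℤ) •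
          ρ (ρ (nestedBracket m α (x ∘ σ))) := by
        simp only [hρ.nestedBracket_comp]
    _ = ρ (ρ (∑ σ : Equiv.Perm (Fin (2 * n - 1)), (Equiv.Perm.sign σ : ℤ) •
          nestedBracket m α (x ∘ σ))) := by
        simp only [map_sum, map_zsmul]
    _ = 0 := by simp only [hm x, map_zero]

theorem homLie_of_nAryLie_endo_general {α : Fin (n - 1) → V →ₗ[K] V}
    (hskew : SkewSymmetricMap m) (hm : HomJacobiIdentity m α)
    {ρ : V →ₗ[K] V} (hρ : IsNAryEndo m ρ) :
    SkewSymmetricMap (ρ.compMultilinearMap m) ∧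
      HomJacobiIdentity (ρ.compMultilinearMap m) (fun i => ρ ∘ₗ α i) :=
  ⟨hskew.compMultilinearMap ρ, hm.comp_of_isNAryEndo hρ⟩

end

/-- Twisting an `n`-ary Lie algebra `(V, m)` by an endomorphism `ρ`
yields the `n`-ary Hom-Lie algebra `(V, ρ ∘ m, (ρ, …, ρ))`: the twisted bracket is
skew-symmetric and satisfies the `n`-ary Hom-Jacobi identity with all twisting maps equal to `ρ`. -/
theorem homLie_of_nAryLie_endo {K V : Type*} [Field K] [CharZero K]
    [AddCommGroup V] [Module K V] {n : ℕ} (hn : 2 ≤ n)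
    (m : MultilinearMap K (fun _ : Fin n => V) V)
    (hskew : SkewSymmetricMap m)
    (hm : HomJacobiIdentity m (fun _ => LinearMap.id))
    (ρ : V →ₗ[K] V) (hρ : IsNAryEndo m ρ) :
    SkewSymmetricMap (ρ.compMultilinearMap m) ∧
      HomJacobiIdentity (ρ.compMultilinearMap m) (fun _ => ρ) :=
  homLie_of_nAryLie_endo_general hskew hm hρ
end

section
/- Let (V, m) be an n-ary totally associative algebra over a field K of characteristic zero and let ρ : V → V be an endomorphism of (V, m). Define m_ρ = ρ ∘ m. Then (V, m_ρ, (ρ, ..., ρ)) is an n-ary totally Hom-associative algebra, i.e. m_ρ satisfies the n-ary total Hom-associativity identity with α_1 = ... = α_{n-1} = ρ. -/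
open scoped BigOperators TensorProduct

/-- The argument vector of the `i`-th term of the Hom-associativity identities:
`(α_1 x_1, …, α_i x_i, m(x_{i+1}, …, x_{i+n}), α_{i+1} x_{i+1+n}, …, α_{n-1} x_{2n-1})`
(written here 0-indexed, with the inner `m` in slot `i`). -/
def AssocArgs {K V : Type*} [Field K] [AddCommGroup V] [Module K V] {n : ℕ}
    (m : MultilinearMap K (fun _ : Fin n => V) V) (α : Fin (n - 1) → V →ₗ[K] V)
    (i : Fin n) (x : Fin (2 * n - 1) → V) : Fin n → V :=
  fun j =>
    if h : (j : ℕ) < (i : ℕ) then α ⟨j, by omega⟩ (x ⟨j, by omega⟩)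
    else if h' : (j : ℕ) = (i : ℕ) then m (fun k : Fin n => x ⟨(i : ℕ) + (k : ℕ), by omega⟩)
    else α ⟨(j : ℕ) - 1, by omega⟩ (x ⟨(j : ℕ) + n - 1, by omega⟩)

/-- The `n`-ary total Hom-associativity identity. -/
def TotalHomAssociativity {K V : Type*} [Field K] [AddCommGroup V] [Module K V] {n : ℕ}
    (m : MultilinearMap K (fun _ : Fin n => V) V) (α : Fin (n - 1) → V →ₗ[K] V) : Prop :=
  ∀ (i j : Fin n), i < j → ∀ x : Fin (2 * n - 1) → V,
    m (AssocArgs m α i x) = m (AssocArgs m α j x)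

section Twist

variable {K V : Type*} [Field K] [AddCommGroup V] [Module K V] {n : ℕ}
  {m : MultilinearMap K (fun _ : Fin n => V) V} {α : Fin (n - 1) → V →ₗ[K] V} {ρ : V →ₗ[K] V}

lemma assocArgs_compMultilinearMap (m : MultilinearMap K (fun _ : Fin n => V) V)
    (α : Fin (n - 1) → V →ₗ[K] V) (ρ : V →ₗ[K] V) (i : Fin n) (x : Fin (2 * n - 1) → V) :
    AssocArgs (ρ.compMultilinearMap m) (fun k => ρ ∘ₗ α k) i x =
      fun k => ρ (AssocArgs m α i x k) := by
  funext k
  unfold AssocArgs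
  split_ifs <;> rfl

lemma IsNAryEndo.compMultilinearMap_assocArgs (hρ : IsNAryEndo m ρ)
    (α : Fin (n - 1) → V →ₗ[K] V) (i : Fin n) (x : Fin (2 * n - 1) → V) :
    ρ.compMultilinearMap m (AssocArgs (ρ.compMultilinearMap m) (fun k => ρ ∘ₗ α k) i x) =
      ρ (ρ (m (AssocArgs m α i x))) := by
  rw [assocArgs_compMultilinearMap, LinearMap.compMultilinearMap_apply, ← hρ]

theorem totallyHomAssoc_of_totallyAssoc_endo_general (hm : TotalHomAssociativity m α)
    (hρ : IsNAryEndo m ρ) :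
    TotalHomAssociativity (ρ.compMultilinearMap m) (fun k => ρ ∘ₗ α k) := by
  intro i j hij x
  rw [hρ.compMultilinearMap_assocArgs, hρ.compMultilinearMap_assocArgs, hm i j hij x]

end Twist

/-- Twisting an `n`-ary totally associative algebra `(V, m)` by an
endomorphism `ρ` yields the `n`-ary totally Hom-associative algebra `(V, ρ ∘ m, (ρ, …, ρ))`. -/
theorem totallyHomAssoc_of_totallyAssoc_endo {K V : Type*} [Field K] [CharZero K]
    [AddCommGroup V] [Module K V] {n : ℕ} (hn : 2 ≤ n)
    (m : MultilinearMap K (fun _ : Fin n => V) V)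
    (hm : TotalHomAssociativity m (fun _ => LinearMap.id))
    (ρ : V →ₗ[K] V) (hρ : IsNAryEndo m ρ) :
    TotalHomAssociativity (ρ.compMultilinearMap m) (fun _ => ρ) := by
  simpa only [LinearMap.comp_id] using totallyHomAssoc_of_totallyAssoc_endo_general hm hρ
end

section
/- Let (V, m) be an n-ary weak totally associative algebra over a field K of characteristic zero and let ρ : V → V be an endomorphism of (V, m). Define m_ρ = ρ ∘ m. Then (V, m_ρ, (ρ, ..., ρ)) is an n-ary weak totally Hom-associative algebra: for all x_1, ..., x_{2n-1} ∈ V, m_ρ(ρ(x_1), ..., ρ(x_{n-1}), m_ρ(x_n, ..., x_{2n-1})) = m_ρ(m_ρ(x_1, ..., x_n), ρ(x_{n+1}), ..., ρ(x_{2n-1})). -/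
open scoped BigOperators TensorProduct

/-- The `n`-ary weak total Hom-associativity identity:
`m(α_1 x_1, …, α_{n-1} x_{n-1}, m(x_n, …, x_{2n-1})) = m(m(x_1, …, x_n), α_1 x_{n+1}, …, α_{n-1} x_{2n-1})`. -/
def WeakTotalHomAssociativity {K V : Type*} [Field K] [AddCommGroup V] [Module K V] {n : ℕ}
    (m : MultilinearMap K (fun _ : Fin n => V) V) (α : Fin (n - 1) → V →ₗ[K] V) : Prop :=
  ∀ x : Fin (2 * n - 1) → V,
    m (fun j : Fin n =>
        if h : (j : ℕ) < n - 1 then α ⟨j, h⟩ (x ⟨j, by omega⟩)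
        else m (fun k : Fin n => x ⟨n - 1 + (k : ℕ), by omega⟩)) =
    m (fun j : Fin n =>
        if h : (j : ℕ) = 0 then m (fun k : Fin n => x ⟨(k : ℕ), by omega⟩)
        else α ⟨(j : ℕ) - 1, by omega⟩ (x ⟨(j : ℕ) + n - 1, by omega⟩))

theorem IsNAryEndo.map_dite {K V : Type*} [Field K] [AddCommGroup V] [Module K V] {n : ℕ}
    {m : MultilinearMap K (fun _ : Fin n => V) V} {ρ : V →ₗ[K] V} (hρ : IsNAryEndo m ρ)
    (p : Fin n → Prop) [DecidablePred p] (a : ∀ j, p j → V) (b : ∀ j, ¬p j → V) :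
    ρ (m fun j => if h : p j then a j h else b j h) =
      m fun j => if h : p j then ρ (a j h) else ρ (b j h) := by
  simp only [hρ _, apply_dite ρ]

theorem weakTotallyHomAssoc_of_weakTotallyAssoc_endo_general {K V : Type*} [Field K]
    [AddCommGroup V] [Module K V] {n : ℕ} {m : MultilinearMap K (fun _ : Fin n => V) V}
    {α : Fin (n - 1) → V →ₗ[K] V} (hm : WeakTotalHomAssociativity m α)
    {ρ : V →ₗ[K] V} (hρ : IsNAryEndo m ρ) :
    WeakTotalHomAssociativity (ρ.compMultilinearMap m) (fun i => ρ ∘ₗ α i) := by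
  intro x
  -- Each side of the twisted identity is `ρ ∘ ρ` applied to the same side of the original one.
  have inner_twist := congrArg ρ (hm x)
  rw [hρ.map_dite, hρ.map_dite] at inner_twist
  exact congrArg ρ inner_twist

/-- Twisting an `n`-ary weak totally associative algebra `(V, m)` by an
endomorphism `ρ` yields the `n`-ary weak totally Hom-associative algebra
`(V, ρ ∘ m, (ρ, …, ρ))`. -/
theorem weakTotallyHomAssoc_of_weakTotallyAssoc_endo {K V : Type*} [Field K] [CharZero K]
    [AddCommGroup V] [Module K V] {n : ℕ} (hn : 2 ≤ n)
    (m : MultilinearMap K (fun _ : Fin n => V) V)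
    (hm : WeakTotalHomAssociativity m (fun _ => LinearMap.id))
    (ρ : V →ₗ[K] V) (hρ : IsNAryEndo m ρ) :
    WeakTotalHomAssociativity (ρ.compMultilinearMap m) (fun _ => ρ) := by
  simpa only [LinearMap.comp_id] using
    weakTotallyHomAssoc_of_weakTotallyAssoc_endo_general hm hρ
end

section
/- Let A = K[x_1, x_2, x_3] be the polynomial algebra in three variables over a field K of characteristic zero, and define the trilinear bracket [f_1, f_2, f_3] = det( (∂f_i/∂x_j)_{1 ≤ i,j ≤ 3} ), the determinant of the functional Jacobian matrix. Then (A, [·,·,·]) is a ternary Nambu-Lie algebra: the bracket is skew-symmetric and satisfies the ternary Nambu (fundamental) identity [x, y, [z, u, v]] = [[x, y, z], u, v] + [z, [x, y, u], v] + [z, u, [x, y, v]] for all x, y, z, u, v ∈ A. -/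
/-!
For fixed `x` and `i`, the operator `g ↦ [x₁, …, g, …, xₙ]` (with `g` in slot `i`) is the vector
field `∑ⱼ cⱼ ∂ⱼ` whose coefficients are cofactors of the Jacobian matrix of `x`. Any vector field
`∑ⱼ cⱼ ∂ⱼ` acts as a derivation of the Jacobian determinant up to the term `(∑ⱼ ∂ⱼcⱼ) [f₁, …, fₙ]`,
and the field above is divergence-free, which gives the fundamental identity. This is the Piola
identity: the divergence pairs the symmetric second derivatives `∂ⱼ∂ₖxᵣ` with determinants that
alternate in `j` and `k`.
-/

open scoped BigOperators

/-- The functional Jacobian bracket on `K[x₁,x₂,x₃]`: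
`[f, g, h] = det((∂fᵢ/∂xⱼ))` where `(f₁,f₂,f₃) = (f,g,h)`. -/
noncomputable def jacBracket {K : Type*} [Field K]
    (f g h : MvPolynomial (Fin 3) K) : MvPolynomial (Fin 3) K :=
  Matrix.det (Matrix.of fun i j => MvPolynomial.pderiv j (![f, g, h] i))

open Matrix MvPolynomial

section Determinant

variable {ι A : Type*} [Fintype ι] [DecidableEq ι] [CommRing A]

theorem det_updateRow_eq_sum_mul_adjugate (M : Matrix ι ι A) (i : ι) (v : ι → A) :
    (M.updateRow i v).det = ∑ j, v j * M.adjugate j i := by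
  rw [← cramer_transpose_apply, cramer_eq_adjugate_mulVec, ← adjugate_transpose]
  exact Finset.sum_congr rfl fun j _ => mul_comm _ _

theorem sum_det_updateRow_eq_trace_mul_adjugate (M N : Matrix ι ι A) :
    ∑ i, (M.updateRow i (N i)).det = (N * M.adjugate).trace := by
  simp only [det_updateRow_eq_sum_mul_adjugate, trace, diag_apply, mul_apply]

theorem det_updateRow_updateRow_swap (M : Matrix ι ι A) {i r : ι} (hir : i ≠ r) (v w : ι → A) :
    ((M.updateRow i w).updateRow r v).det = -((M.updateRow i v).updateRow r w).det := by
  have hswap : (M.updateRow i w).updateRow r v =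
      ((M.updateRow i v).updateRow r w).submatrix (Equiv.swap i r) id := by
    ext k l
    simp only [submatrix_apply, updateRow_apply, id]
    grind
  rw [hswap, det_permute, Equiv.Perm.sign_swap hir, Units.val_neg, Units.val_one, Int.cast_neg,
    Int.cast_one, neg_one_mul]

theorem sum_det_updateRow_single_updateRow_eq_zero (M : Matrix ι ι A) {S : Matrix ι ι A}
    (hS : S.IsSymm) {i r : ι} (hir : i ≠ r) :
    ∑ j, ((M.updateRow i (Pi.single j 1)).updateRow r (S j)).det = 0 := by
  let E (p : ι × ι) : A :=
    ((M.updateRow i (Pi.single p.1 1)).updateRow r (Pi.single p.2 1)).det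
  have hE (p : ι × ι) : E p.swap = -E p := det_updateRow_updateRow_swap M hir _ _
  have hdiag (j : ι) : E (j, j) = 0 :=
    det_zero_of_row_eq hir (by simp [updateRow_ne hir])
  calc ∑ j, ((M.updateRow i (Pi.single j 1)).updateRow r (S j)).det
      = ∑ p : ι × ι, S p.1 p.2 * E p := by
        simp only [det_updateRow_eq_sum_mul_adjugate _ r (S _), adjugate_apply,
          Fintype.sum_prod_type, E]
    _ = 0 := by
        refine Finset.sum_involution (fun p _ => p.swap) (fun p _ => ?_) (fun p _ hp hswap => ?_)
          (fun _ _ => Finset.mem_univ _) (fun p _ => p.swap_swap)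
        · rw [hE, Prod.fst_swap, Prod.snd_swap, hS.apply]
          ring
        · obtain ⟨j, k⟩ := p
          obtain rfl : k = j := congrArg Prod.fst hswap
          exact hp (by rw [hdiag, mul_zero])

end Determinant

theorem derivation_prod {R A M ι : Type*} [CommSemiring R] [CommSemiring A] [AddCommMonoid M]
    [Algebra R A] [Module A M] [Module R M] [DecidableEq ι] (d : Derivation R A M)
    (s : Finset ι) (f : ι → A) :
    d (∏ i ∈ s, f i) = ∑ i ∈ s, (∏ j ∈ s.erase i, f j) • d (f i) := by
  induction s using Finset.induction_on with
  | empty => simp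
  | insert a s ha ih =>
    rw [Finset.prod_insert ha, d.leibniz, ih, Finset.sum_insert ha, Finset.erase_insert ha,
      add_comm, Finset.smul_sum]
    congr 1
    refine Finset.sum_congr rfl fun i hi => ?_
    have hai : a ≠ i := fun h => ha (h ▸ hi)
    rw [Finset.erase_insert_of_ne hai, Finset.prod_insert (by simp [ha]), smul_smul]

theorem derivation_det {ι R A : Type*} [Fintype ι] [DecidableEq ι] [CommRing R] [CommRing A]
    [Algebra R A] (d : Derivation R A A) (M : Matrix ι ι A) :
    d M.det = ∑ i, (M.updateRow i (d ∘ M i)).det := by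
  have prod_updateRow (i : ι) (σ : Equiv.Perm ι) :
      ∏ k, M.updateRow i (d ∘ M i) k (σ k) =
        (∏ k ∈ Finset.univ.erase i, M k (σ k)) * d (M i (σ i)) := by
    rw [← Finset.prod_erase_mul _ _ (Finset.mem_univ i), updateRow_self, Function.comp_apply]
    congr 1
    exact Finset.prod_congr rfl fun k hk => by rw [updateRow_ne (Finset.ne_of_mem_erase hk)]
  calc d M.det
      = ∑ σ : Equiv.Perm ι, Equiv.Perm.sign σ • d (∏ k, M k (σ k)) := by
        rw [← det_transpose, det_apply, map_sum]
        exact Finset.sum_congr rfl fun σ _ => map_zsmul d _ _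
    _ = ∑ σ : Equiv.Perm ι, ∑ i, Equiv.Perm.sign σ • ∏ k, M.updateRow i (d ∘ M i) k (σ k) := by
        simp only [derivation_prod, Finset.smul_sum, prod_updateRow, smul_eq_mul]
    _ = ∑ i, (M.updateRow i (d ∘ M i)).det := by
        rw [Finset.sum_comm]
        refine Finset.sum_congr rfl fun i _ => ?_
        rw [← det_transpose, det_apply]
        rfl

theorem derivation_comm_of_lie_eq_zero {R A : Type*} [CommRing R] [CommRing A] [Algebra R A]
    {d₁ d₂ : Derivation R A A} (h : ⁅d₁, d₂⁆ = 0) (a : A) : d₁ (d₂ a) = d₂ (d₁ a) := by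
  rw [← sub_eq_zero, ← Derivation.commutator_apply, h, Derivation.zero_apply]

section Jacobian

variable {ι R A : Type*} [CommRing R] [CommRing A] [Algebra R A]

/-- The Jacobian matrix `(Dⱼ fᵢ)` of a family `f`, with arbitrary derivations `Dⱼ` in the role of
the partial derivatives `∂/∂xⱼ`. -/
def jacobianMatrix (D : ι → Derivation R A A) (f : ι → A) : Matrix ι ι A :=
  of fun i j => D j (f i)

theorem jacobianMatrix_update [DecidableEq ι] (D : ι → Derivation R A A) (f : ι → A) (i : ι)
    (g : A) :
    jacobianMatrix D (Function.update f i g) =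
      (jacobianMatrix D f).updateRow i (fun j => D j g) := by
  ext r j
  obtain rfl | hr := eq_or_ne r i
  · simp [jacobianMatrix]
  · simp [jacobianMatrix, hr]

variable [Fintype ι]

/-- The derivation `∑ⱼ cⱼ Dⱼ`, that is, the vector field with coefficients `c` in the frame `D`. -/
def vectorField (D : ι → Derivation R A A) (c : ι → A) : Derivation R A A :=
  ∑ j, c j • D j

theorem vectorField_apply (D : ι → Derivation R A A) (c : ι → A) (g : A) :
    vectorField D c g = ∑ j, c j * D j g := by
  change Derivation.coeFnAddMonoidHom (∑ j, c j • D j) g = _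
  simp

theorem jacobianMatrix_vectorField {D : ι → Derivation R A A} (hD : ∀ i j, ⁅D i, D j⁆ = 0)
    (c f : ι → A) :
    jacobianMatrix D (vectorField D c ∘ f) =
      (jacobianMatrix D f).map (vectorField D c) + jacobianMatrix D f * jacobianMatrix D c := by
  ext i k
  have hcomm (j : ι) : D k (D j (f i)) = D j (D k (f i)) :=
    derivation_comm_of_lie_eq_zero (hD k j) (f i)
  simp [jacobianMatrix, vectorField_apply, mul_apply, Finset.sum_add_distrib, hcomm]

variable [DecidableEq ι]

/-- The `n`-ary functional Jacobian bracket `[f₁, …, fₙ] = det (Dⱼ fᵢ)`. -/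
def jacobianBracket (D : ι → Derivation R A A) (f : ι → A) : A :=
  (jacobianMatrix D f).det

theorem jacobianBracket_comp_perm (D : ι → Derivation R A A) (σ : Equiv.Perm ι) (f : ι → A) :
    jacobianBracket D (f ∘ σ) = (Equiv.Perm.sign σ : ℤ) • jacobianBracket D f := by
  rw [zsmul_eq_mul]
  exact det_permute σ (jacobianMatrix D f)

theorem jacobianBracket_update_eq_vectorField (D : ι → Derivation R A A) (x : ι → A) (i : ι)
    (g : A) :
    jacobianBracket D (Function.update x i g) =
      vectorField D (fun j => (jacobianMatrix D x).adjugate j i) g := by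
  simp only [jacobianBracket, jacobianMatrix_update, det_updateRow_eq_sum_mul_adjugate,
    vectorField_apply, mul_comm]

theorem sum_apply_adjugate_jacobianMatrix_eq_zero {D : ι → Derivation R A A}
    (hD : ∀ i j, ⁅D i, D j⁆ = 0) (x : ι → A) (i : ι) :
    ∑ j, D j ((jacobianMatrix D x).adjugate j i) = 0 := by
  let U (j : ι) : Matrix ι ι A := (jacobianMatrix D x).updateRow i (Pi.single j 1)
  have hsymm (r : ι) : (of fun j k => D j (D k (x r))).IsSymm := by
    ext j k
    exact derivation_comm_of_lie_eq_zero (hD k j) (x r)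
  calc ∑ j, D j ((jacobianMatrix D x).adjugate j i)
      = ∑ r, ∑ j, ((U j).updateRow r (D j ∘ U j r)).det := by
        simp only [adjugate_apply, derivation_det]
        exact Finset.sum_comm
    _ = 0 := by
        refine Finset.sum_eq_zero fun r _ => ?_
        obtain rfl | hir := eq_or_ne i r
        · refine Finset.sum_eq_zero fun j _ => det_eq_zero_of_row_eq_zero i fun k => ?_
          simp [U, Pi.single_apply, apply_ite]
        · have hrow (j : ι) : D j ∘ U j r = fun k => D j (D k (x r)) :=
            congrArg (D j ∘ ·) (updateRow_ne hir.symm)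
          simp only [hrow]
          exact sum_det_updateRow_single_updateRow_eq_zero (jacobianMatrix D x) (hsymm r) hir

theorem sum_jacobianBracket_update_vectorField {D : ι → Derivation R A A}
    (hD : ∀ i j, ⁅D i, D j⁆ = 0) (c f : ι → A) :
    ∑ i, jacobianBracket D (Function.update f i (vectorField D c (f i))) =
      vectorField D c (jacobianBracket D f) + (∑ j, D j (c j)) * jacobianBracket D f := by
  set J := jacobianMatrix D f
  have hmap : (J.map (vectorField D c) * J.adjugate).trace = vectorField D c J.det := by
    rw [derivation_det, ← sum_det_updateRow_eq_trace_mul_adjugate]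
    rfl
  have hdiv : (J * jacobianMatrix D c * J.adjugate).trace = (∑ j, D j (c j)) * J.det := by
    rw [trace_mul_cycle, adjugate_mul, smul_mul, one_mul, trace_smul, smul_eq_mul, mul_comm]
    rfl
  calc ∑ i, jacobianBracket D (Function.update f i (vectorField D c (f i)))
      = (jacobianMatrix D (vectorField D c ∘ f) * J.adjugate).trace := by
        simp only [jacobianBracket, jacobianMatrix_update,
          ← sum_det_updateRow_eq_trace_mul_adjugate]
        rfl
    _ = vectorField D c J.det + (∑ j, D j (c j)) * J.det := by
        rw [jacobianMatrix_vectorField hD, add_mul, trace_add, hmap, hdiv]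

theorem jacobianBracket_fundamental_identity {D : ι → Derivation R A A}
    (hD : ∀ i j, ⁅D i, D j⁆ = 0) (x f : ι → A) (i : ι) :
    jacobianBracket D (Function.update x i (jacobianBracket D f)) =
      ∑ r, jacobianBracket D
        (Function.update f r (jacobianBracket D (Function.update x i (f r)))) := by
  simp only [jacobianBracket_update_eq_vectorField D x i]
  rw [sum_jacobianBracket_update_vectorField hD, sum_apply_adjugate_jacobianMatrix_eq_zero hD,
    zero_mul, add_zero]

end Jacobian

theorem lie_pderiv_pderiv {R σ : Type*} [CommRing R] (i j : σ) :
    ⁅pderiv (R := R) i, pderiv (R := R) j⁆ = 0 := by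
  classical
  refine MvPolynomial.derivation_ext fun k => ?_
  simp [Derivation.commutator_apply, pderiv_X, Pi.single_apply, apply_ite]

theorem jacBracket_eq_jacobianBracket {K : Type*} [Field K] (f : Fin 3 → MvPolynomial (Fin 3) K) :
    jacBracket (f 0) (f 1) (f 2) = jacobianBracket pderiv f := by
  have hf : ![f 0, f 1, f 2] = f := by
    ext1 i
    fin_cases i <;> rfl
  rw [jacBracket, hf, jacobianBracket, jacobianMatrix]

theorem jacBracket_ternary_nambuLie_general {ι R A : Type*} [Fintype ι] [DecidableEq ι]
    [CommRing R] [CommRing A] [Algebra R A] {D : ι → Derivation R A A}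
    (hD : ∀ i j, ⁅D i, D j⁆ = 0) :
    (∀ (σ : Equiv.Perm ι) (f : ι → A),
        jacobianBracket D (f ∘ σ) = (Equiv.Perm.sign σ : ℤ) • jacobianBracket D f) ∧
      (∀ (x f : ι → A) (i : ι),
        jacobianBracket D (Function.update x i (jacobianBracket D f)) =
          ∑ r, jacobianBracket D
            (Function.update f r (jacobianBracket D (Function.update x i (f r))))) :=
  ⟨jacobianBracket_comp_perm D, jacobianBracket_fundamental_identity hD⟩

/-- The polynomial algebra `K[x₁,x₂,x₃]` with the functional Jacobian
bracket is a ternary Nambu-Lie algebra: the bracket is skew-symmetric and satisfies the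
ternary Nambu (fundamental) identity. -/
theorem jacBracket_ternary_nambuLie {K : Type*} [Field K] [CharZero K] :
    (∀ (σ : Equiv.Perm (Fin 3)) (f : Fin 3 → MvPolynomial (Fin 3) K),
        jacBracket (f (σ 0)) (f (σ 1)) (f (σ 2)) =
          (Equiv.Perm.sign σ : ℤ) • jacBracket (f 0) (f 1) (f 2)) ∧
      (∀ x y z u v : MvPolynomial (Fin 3) K,
        jacBracket x y (jacBracket z u v) =
          jacBracket (jacBracket x y z) u v + jacBracket z (jacBracket x y u) v +
            jacBracket z u (jacBracket x y v)) := by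
  obtain ⟨skew, fundamental⟩ := jacBracket_ternary_nambuLie_general
    (lie_pderiv_pderiv (R := K) (σ := Fin 3))
  refine ⟨fun σ f => ?_, fun x y z u v => ?_⟩
  · simpa only [← jacBracket_eq_jacobianBracket] using! skew σ f
  · simpa [← jacBracket_eq_jacobianBracket, Fin.sum_univ_three] using!
      fundamental ![x, y, 0] ![z, u, v] 2
end

section
/- Let (V, m, (α_1, ..., α_{n-1})) be an n-ary totally Hom-associative algebra and (V', m', (α'_1, ..., α'_{n-1})) an n-ary partially Hom-associative algebra over a field K of characteristic zero. Let M : (V ⊗ V')^n → V ⊗ V' be an n-linear map satisfying M(x_1 ⊗ x'_1, ..., x_n ⊗ x'_n) = m(x_1, ..., x_n) ⊗ m'(x'_1, ..., x'_n) on pure tensors, and set β_i = α_i ⊗ α'_i for i = 1, ..., n-1. Then (V ⊗ V', M, (β_1, ..., β_{n-1})) is an n-ary partially Hom-associative algebra, i.e. M satisfies the n-ary partial Hom-associativity identity with respect to (β_1, ..., β_{n-1}). -/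
/-!
Every variable `x p` enters exactly one slot of the argument vector of each term, and does so
linearly, so the left-hand side of the partial Hom-associativity identity is multilinear and it
suffices to check it on pure tensors `x p = y p ⊗ y' p`. There the `i`-th term is the tensor product
of the `i`-th terms of the two factors. By total Hom-associativity the left factor does not depend
on `i`, so it can be pulled out of the sum, and the remaining sum of right factors vanishes by
partial Hom-associativity.
-/

open scoped BigOperators TensorProduct

/-- The `n`-ary partial Hom-associativity identity. -/
def PartialHomAssociativity {K V : Type*} [Field K] [AddCommGroup V] [Module K V] {n : ℕ}
    (m : MultilinearMap K (fun _ : Fin n => V) V) (α : Fin (n - 1) → V →ₗ[K] V) : Prop :=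
  ∀ x : Fin (2 * n - 1) → V, ∑ i : Fin n, m (AssocArgs m α i x) = 0

lemma multilinearMap_ext_tmul {R ι W : Type*} {V V' : ι → Type*} [CommSemiring R] [Finite ι]
    [∀ p, AddCommMonoid (V p)] [∀ p, Module R (V p)]
    [∀ p, AddCommMonoid (V' p)] [∀ p, Module R (V' p)] [AddCommMonoid W] [Module R W]
    {f g : MultilinearMap R (fun p => V p ⊗[R] V' p) W}
    (h : ∀ (y : ∀ p, V p) (y' : ∀ p, V' p),
      f (fun p => y p ⊗ₜ[R] y' p) = g (fun p => y p ⊗ₜ[R] y' p)) :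
    f = g := by
  refine MultilinearMap.ext_of_span_eq_top (γ := fun p => V p × V' p)
    (g := fun _ a => a.1 ⊗ₜ[R] a.2) (fun p => ?_)
    (fun a => h (fun p => (a p).1) (fun p => (a p).2))
  rw [← TensorProduct.span_tmul_eq_top R (V p) (V' p)]
  congr 1
  ext t
  simp only [Set.mem_range, Prod.exists, Set.mem_ofPred_eq]

section AssocArgs

variable {K V : Type*} [Field K] [AddCommGroup V] [Module K V] {n : ℕ}
  (m : MultilinearMap K (fun _ : Fin n => V) V) (α : Fin (n - 1) → V →ₗ[K] V)

lemma assocArgs_of_lt {i j : Fin n} (h : j < i) (x : Fin (2 * n - 1) → V) :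
    AssocArgs m α i x j = α ⟨j, by omega⟩ (x ⟨j, by omega⟩) :=
  dif_pos h

lemma assocArgs_self (i : Fin n) (x : Fin (2 * n - 1) → V) :
    AssocArgs m α i x i = m (fun k => x ⟨i + k, by omega⟩) := by
  simp [AssocArgs]

lemma assocArgs_of_gt {i j : Fin n} (h : i < j) (x : Fin (2 * n - 1) → V) :
    AssocArgs m α i x j = α ⟨j - 1, by omega⟩ (x ⟨j + n - 1, by omega⟩) := by
  simp [AssocArgs, (Fin.lt_def.mp h).not_gt, (Fin.lt_def.mp h).ne']

lemma assocArgs_update_of_lt {i j : Fin n} (h : j < i) (x : Fin (2 * n - 1) → V) (v : V) :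
    AssocArgs m α i (Function.update x ⟨j, by omega⟩ v) =
      Function.update (AssocArgs m α i x) j (α ⟨j, by omega⟩ v) := by
  ext l
  rcases lt_trichotomy l i with hl | rfl | hl
  · rcases eq_or_ne l j with rfl | hlj
    · simp [assocArgs_of_lt m α h]
    · simp [assocArgs_of_lt m α hl, hlj, Fin.val_ne_of_ne hlj]
  · have hblock (k : Fin n) : (l + k : ℕ) ≠ j := by omega
    simp [assocArgs_self, h.ne', hblock]
  · have hright : (l + n - 1 : ℕ) ≠ j := by omega
    simp [assocArgs_of_gt m α hl, (h.trans hl).ne', hright]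

lemma assocArgs_update_add (i k : Fin n) (x : Fin (2 * n - 1) → V) (v : V) :
    AssocArgs m α i (Function.update x ⟨i + k, by omega⟩ v) =
      Function.update (AssocArgs m α i x) i
        (m (Function.update (fun l => x ⟨i + l, by omega⟩) k v)) := by
  ext l
  rcases lt_trichotomy l i with hl | rfl | hl
  · have hleft : (l : ℕ) ≠ i + k := by omega
    simp [assocArgs_of_lt m α hl, hl.ne, hleft]
  · rw [assocArgs_self, Function.update_self]
    congr 1
    ext l'
    simp [Function.update_apply, Fin.ext_iff]
  · have hright : (l + n - 1 : ℕ) ≠ i + k := by omega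
    simp [assocArgs_of_gt m α hl, hl.ne', hright]

lemma assocArgs_update_of_gt {i j : Fin n} (h : i < j) (x : Fin (2 * n - 1) → V) (v : V) :
    AssocArgs m α i (Function.update x ⟨j + n - 1, by omega⟩ v) =
      Function.update (AssocArgs m α i x) j (α ⟨j - 1, by omega⟩ v) := by
  ext l
  rcases lt_trichotomy l i with hl | rfl | hl
  · have hleft : (l : ℕ) ≠ j + n - 1 := by omega
    simp [assocArgs_of_lt m α hl, (hl.trans h).ne, hleft]
  · have hblock (k : Fin n) : (l + k : ℕ) ≠ j + n - 1 := by omega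
    simp [assocArgs_self, h.ne, hblock]
  · rcases eq_or_ne l j with rfl | hlj
    · simp [assocArgs_of_gt m α h]
    · have hright : (l + n - 1 : ℕ) ≠ j + n - 1 := by omega
      simp [assocArgs_of_gt m α hl, hlj, hright]

lemma exists_assocArgs_update_eq (i : Fin n) (x : Fin (2 * n - 1) → V) (p : Fin (2 * n - 1)) :
    ∃ (q : Fin n) (L : V →ₗ[K] V), ∀ v : V,
      AssocArgs m α i (Function.update x p v) =
        Function.update (AssocArgs m α i x) q (L v) := by
  obtain ⟨p, hp⟩ := p
  rcases lt_or_ge p i with hleft | hi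
  · obtain ⟨j, rfl⟩ : ∃ j : Fin n, (j : ℕ) = p := ⟨⟨p, by omega⟩, rfl⟩
    exact ⟨j, α ⟨j, by omega⟩, assocArgs_update_of_lt m α hleft x⟩
  rcases lt_or_ge p (i + n) with hblock | hright
  · obtain ⟨k, rfl⟩ := Nat.exists_eq_add_of_le hi
    exact ⟨i, m.toLinearMap (fun l => x ⟨i + l, by omega⟩) ⟨k, by omega⟩,
      assocArgs_update_add m α i ⟨k, by omega⟩ x⟩
  · obtain ⟨j, hj, rfl⟩ : ∃ j : Fin n, i < j ∧ p = j + n - 1 :=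
      ⟨⟨p + 1 - n, by omega⟩, by simp only [Fin.lt_def]; omega, by simp only; omega⟩
    exact ⟨j, α ⟨j - 1, by omega⟩, assocArgs_update_of_gt m α hj x⟩

/-- The `i`-th term of the Hom-associativity identities, that is, the partial composition of `m`
with itself in slot `i` twisted by `α`, as a multilinear map in all `2 n - 1` variables. -/
def homAssocTerm (i : Fin n) : MultilinearMap K (fun _ : Fin (2 * n - 1) => V) V :=
  MultilinearMap.mk' (fun x => m (AssocArgs m α i x))
    (fun x p v w => by
      obtain ⟨q, L, hL⟩ := exists_assocArgs_update_eq m α i x p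
      simp only [hL, map_add, MultilinearMap.map_update_add])
    (fun x p c v => by
      obtain ⟨q, L, hL⟩ := exists_assocArgs_update_eq m α i x p
      simp only [hL, map_smul, MultilinearMap.map_update_smul])

variable {m α}

lemma partialHomAssociativity_iff_sum_homAssocTerm_eq_zero :
    PartialHomAssociativity m α ↔ ∑ i, homAssocTerm m α i = 0 := by
  simp [PartialHomAssociativity, MultilinearMap.ext_iff, homAssocTerm]

lemma TotalHomAssociativity.apply_assocArgs_eq (hm : TotalHomAssociativity m α) (i j : Fin n)
    (x : Fin (2 * n - 1) → V) : m (AssocArgs m α i x) = m (AssocArgs m α j x) := by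
  rcases lt_trichotomy i j with h | rfl | h
  · exact hm i j h x
  · rfl
  · exact (hm j i h x).symm

end AssocArgs

section Tensor

variable {K V V' : Type*} [Field K] [AddCommGroup V] [Module K V] [AddCommGroup V'] [Module K V']
  {n : ℕ} {m : MultilinearMap K (fun _ : Fin n => V) V}
  {m' : MultilinearMap K (fun _ : Fin n => V') V'}
  {M : MultilinearMap K (fun _ : Fin n => V ⊗[K] V') (V ⊗[K] V')}

lemma PartialHomAssociativity.of_tmul {β : Fin (n - 1) → V ⊗[K] V' →ₗ[K] V ⊗[K] V'}
    (h : ∀ (y : Fin (2 * n - 1) → V) (y' : Fin (2 * n - 1) → V'),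
      ∑ i, M (AssocArgs M β i (fun p => y p ⊗ₜ[K] y' p)) = 0) :
    PartialHomAssociativity M β := by
  rw [partialHomAssociativity_iff_sum_homAssocTerm_eq_zero]
  refine multilinearMap_ext_tmul fun y y' => ?_
  simpa [homAssocTerm] using h y y'

lemma assocArgs_tmul
    (hM : ∀ (x : Fin n → V) (x' : Fin n → V'),
      M (fun i => x i ⊗ₜ[K] x' i) = m x ⊗ₜ[K] m' x')
    (α : Fin (n - 1) → V →ₗ[K] V) (α' : Fin (n - 1) → V' →ₗ[K] V') (i : Fin n)
    (y : Fin (2 * n - 1) → V) (y' : Fin (2 * n - 1) → V') :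
    AssocArgs M (fun k => TensorProduct.map (α k) (α' k)) i (fun p => y p ⊗ₜ[K] y' p) =
      fun j => AssocArgs m α i y j ⊗ₜ[K] AssocArgs m' α' i y' j := by
  ext j
  rcases lt_trichotomy j i with h | rfl | h
  · simp only [assocArgs_of_lt _ _ h, TensorProduct.map_tmul]
  · simp only [assocArgs_self, hM]
  · simp only [assocArgs_of_gt _ _ h, TensorProduct.map_tmul]

theorem tensor_totallyHomAssoc_partiallyHomAssoc_general
    {α : Fin (n - 1) → V →ₗ[K] V} {α' : Fin (n - 1) → V' →ₗ[K] V'}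
    (hm : TotalHomAssociativity m α) (hm' : PartialHomAssociativity m' α')
    (hM : ∀ (x : Fin n → V) (x' : Fin n → V'),
      M (fun i => x i ⊗ₜ[K] x' i) = m x ⊗ₜ[K] m' x') :
    PartialHomAssociativity M (fun i => TensorProduct.map (α i) (α' i)) := by
  refine .of_tmul fun y y' => ?_
  obtain ⟨c, hc⟩ : ∃ c, ∀ i, m (AssocArgs m α i y) = c := by
    rcases isEmpty_or_nonempty (Fin n) with _ | ⟨⟨i₀⟩⟩
    · exact ⟨0, isEmptyElim⟩
    · exact ⟨_, fun i => hm.apply_assocArgs_eq i i₀ y⟩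
  calc ∑ i, M (AssocArgs M (fun k => TensorProduct.map (α k) (α' k)) i
          (fun p => y p ⊗ₜ[K] y' p))
      = ∑ i, c ⊗ₜ[K] m' (AssocArgs m' α' i y') := by simp only [assocArgs_tmul hM, hM, hc]
    _ = c ⊗ₜ[K] ∑ i, m' (AssocArgs m' α' i y') := (TensorProduct.tmul_sum ..).symm
    _ = 0 := by rw [hm' y', TensorProduct.tmul_zero]

end Tensor

/-- The tensor product of an `n`-ary totally Hom-associative algebra
`(V, m, (α_i))` and an `n`-ary partially Hom-associative algebra `(V', m', (α'_i))` is an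
`n`-ary partially Hom-associative algebra `(V ⊗ V', M, (α_i ⊗ α'_i))`, where `M` is the
tensor product of the `n`-linear maps `m` and `m'`. -/
theorem tensor_totallyHomAssoc_partiallyHomAssoc {K V V' : Type*} [Field K] [CharZero K]
    [AddCommGroup V] [Module K V] [AddCommGroup V'] [Module K V']
    {n : ℕ} (hn : 2 ≤ n)
    (m : MultilinearMap K (fun _ : Fin n => V) V)
    (m' : MultilinearMap K (fun _ : Fin n => V') V')
    (α : Fin (n - 1) → V →ₗ[K] V) (α' : Fin (n - 1) → V' →ₗ[K] V')
    (hm : TotalHomAssociativity m α)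
    (hm' : PartialHomAssociativity m' α')
    (M : MultilinearMap K (fun _ : Fin n => V ⊗[K] V') (V ⊗[K] V'))
    (hM : ∀ (x : Fin n → V) (x' : Fin n → V'),
      M (fun i => x i ⊗ₜ[K] x' i) = m x ⊗ₜ[K] m' x') :
    PartialHomAssociativity M (fun i => TensorProduct.map (α i) (α' i)) :=
  tensor_totallyHomAssoc_partiallyHomAssoc_general hm hm' hM
end
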